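/- Let A and B₁, …, B_m be convex bodies in ℝⁿ, let 1 ≤ k ≤ m, and let 𝒞_k denote the collection of all subsets of {1, …, m} of cardinality k. Suppose that for each s ∈ 𝒞_k one has |A + Σ_{i∈s} B_i|^{1/n} ≤ c_s · |A|^{1/n} for given numbers c_s. Then |A + Σ_{i=1}^{m} B_i|^{1/n} ≤ (1+m) · (Π_{s∈𝒞_k} c_s)^{1/binom(m−1, k−1)} · |A|^{1/n}. -/

import Mathlib

open MeasureTheory ProbabilityTheory Real
open scoped Pointwise ENNReal

noncomputable def ent {n : ℕ} (f : EuclideanSpace ℝ (Fin n) → ℝ) : ℝ :=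
  -∫ x, f x * Real.log (f x)

noncomputable def densSup {n : ℕ} (f : EuclideanSpace ℝ (Fin n) → ℝ) : ℝ :=
  (essSup (fun x => ENNReal.ofReal (f x)) volume).toReal

def HasDensity {Ω : Type*} [MeasurableSpace Ω] (P : Measure Ω) {n : ℕ}
    (X : Ω → EuclideanSpace ℝ (Fin n)) (f : EuclideanSpace ℝ (Fin n) → ℝ) : Prop :=
  Measure.map X P = volume.withDensity (fun x => ENNReal.ofReal (f x))

def ConvexForm {n : ℕ} (f : EuclideanSpace ℝ (Fin n) → ℝ) (β : ℝ) : Prop :=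
  ∃ (S : Set (EuclideanSpace ℝ (Fin n))) (V : EuclideanSpace ℝ (Fin n) → ℝ),
    IsOpen S ∧ Convex ℝ S ∧ ConvexOn ℝ S V ∧
    (∀ x ∈ S, 0 < V x) ∧ (∀ x ∈ S, f x = V x ^ (-β)) ∧ (∀ x ∉ S, f x = 0)

def LogConcaveDensity {n : ℕ} (f : EuclideanSpace ℝ (Fin n) → ℝ) : Prop :=
  (∀ x, 0 ≤ f x) ∧
  ∀ x y : EuclideanSpace ℝ (Fin n), ∀ t : ℝ, 0 < t → t < 1 →
    f x ^ t * f y ^ (1 - t) ≤ f (t • x + (1 - t) • y)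

def KConcave {n : ℕ} (μ : Measure (EuclideanSpace ℝ (Fin n))) (κ : ℝ) : Prop :=
  ∀ A B : Set (EuclideanSpace ℝ (Fin n)), MeasurableSet A → MeasurableSet B →
    0 < μ A → 0 < μ B → ∀ t : ℝ, 0 < t → t < 1 →
      (t * (μ A).toReal ^ κ + (1 - t) * (μ B).toReal ^ κ) ^ (1/κ) ≤
        (μ (t • A + (1 - t) • B)).toReal

def IsConvexBody {n : ℕ} (A : Set (EuclideanSpace ℝ (Fin n))) : Prop :=
  Convex ℝ A ∧ IsCompact A ∧ (interior A).Nonempty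

def IsUniformOn {Ω : Type*} [MeasurableSpace Ω] (P : Measure Ω) {n : ℕ}
    (X : Ω → EuclideanSpace ℝ (Fin n)) (A : Set (EuclideanSpace ℝ (Fin n))) : Prop :=
  Measure.map X P = (volume A)⁻¹ • volume.restrict A

/-!
Let `X` and `Y₁, …, Y_m` be independent and uniformly distributed on `A` and `B₁, …, B_m`, and put
`H s = h (X + ∑ i ∈ s, Y i)`, where `h` is differential entropy. Jensen's inequality shows that `H`
is submodular, and averaging over the sets of size `k` gives
`binom (m - 1) (k - 1) * (H univ - H ∅) ≤ ∑ s, (H s - H ∅)`. Here `H ∅ = log |A|`, and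
`H s ≤ log |A + ∑ i ∈ s, B i|` because the uniform distribution maximizes entropy.

It remains to bound `H univ` from below. The density `g` of `X + ∑ i, Y i` is an `m`-fold
convolution of densities of convex bodies, so it satisfies
`b ^ (n * m) * g s ≤ g (a • t + b • s)` for `a + b = 1` and `t ∈ K := A + ∑ i, B i`. Feeding `g` and
the indicator function of `K` into the Prékopa–Leindler inequality with weights `a` and `b` bounds
a moment of `g`, hence its entropy; letting `a` tend to `0`, this reads
`log |K| - n * log (1 + m) ≤ H univ`, which is where the factor `1 + m` comes from.
-/

section BrunnMinkowskiLine

lemma volume_add_volume_le_of_isCompact {K L : Set ℝ} (hK : IsCompact K) (hL : IsCompact L)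
    (hK₀ : K.Nonempty) (hL₀ : L.Nonempty) : volume K + volume L ≤ volume (K + L) := by
  obtain ⟨a, haK, ha⟩ := hK.exists_isGreatest hK₀
  obtain ⟨b, hbL, hb⟩ := hL.exists_isLeast hL₀
  -- The translates `K + b` and `a + L` of `K` and `L` lie in `K + L` and meet only at `a + b`.
  have h_inter : volume ((K + {b}) ∩ ({a} + L)) = 0 := by
    refine measure_mono_null (t := {a + b}) ?_ Real.volume_singleton
    simp only [Set.add_singleton, Set.singleton_add]
    rintro _ ⟨⟨x, hx, rfl⟩, y, hy, hxy : a + y = x + b⟩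
    have hxa : x ≤ a := ha hx
    have hby : b ≤ y := hb hy
    exact Set.mem_singleton_iff.2 (by linarith)
  calc volume K + volume L
      = volume (K + {b}) + volume ({a} + L) := by
        simp only [Set.add_singleton, Set.image_add_right, measure_preimage_add_right,
          Set.singleton_add, Set.image_add_left, measure_preimage_add]
    _ = volume ((K + {b}) ∪ ({a} + L)) :=
        (measure_union₀ (isCompact_singleton.add hL).nullMeasurableSet h_inter).symm
    _ ≤ volume (K + L) := measure_mono <| Set.union_subset
        (Set.add_subset_add_left (Set.singleton_subset_iff.2 hbL))
        (Set.add_subset_add_right (Set.singleton_subset_iff.2 haK))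

lemma volume_add_volume_le {A B : Set ℝ} (hA : MeasurableSet A) (hB : MeasurableSet B)
    (hA₀ : A.Nonempty) (hB₀ : B.Nonempty) : volume A + volume B ≤ volume (A + B) := by
  obtain ⟨a, ha⟩ := hA₀
  obtain ⟨b, hb⟩ := hB₀
  rw [hA.measure_eq_iSup_isCompact, hB.measure_eq_iSup_isCompact]
  simp only [iSup_and']
  refine ENNReal.biSup_add_biSup_le' ⟨∅, Set.empty_subset _, isCompact_empty⟩
    ⟨∅, Set.empty_subset _, isCompact_empty⟩ ?_
  rintro K ⟨hKA, hK⟩ L ⟨hLB, hL⟩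
  calc volume K + volume L
      ≤ volume (insert a K) + volume (insert b L) := by gcongr <;> exact Set.subset_insert _ _
    _ ≤ volume (insert a K + insert b L) :=
        volume_add_volume_le_of_isCompact (hK.insert a) (hL.insert b)
          (Set.insert_nonempty _ _) (Set.insert_nonempty _ _)
    _ ≤ volume (A + B) := by
        gcongr
        · exact Set.insert_subset ha hKA
        · exact Set.insert_subset hb hLB

end BrunnMinkowskiLine

section PrekopaLeindler

lemma ennreal_geom_mean_le_arith_mean {a b : ℝ} (ha : 0 < a) (hb : 0 < b) (hab : a + b = 1)
    (x y : ℝ≥0∞) : x ^ a * y ^ b ≤ ENNReal.ofReal a * x + ENNReal.ofReal b * y := by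
  rcases eq_or_ne x ∞ with rfl | hx
  · simp [ENNReal.mul_top (ENNReal.ofReal_pos.2 ha).ne']
  rcases eq_or_ne y ∞ with rfl | hy
  · simp [ENNReal.mul_top (ENNReal.ofReal_pos.2 hb).ne']
  lift x to NNReal using hx
  lift y to NNReal using hy
  have h := NNReal.geom_mean_le_arith_mean2_weighted a.toNNReal b.toNNReal x y
    (by rw [← Real.toNNReal_add ha.le hb.le, hab, Real.toNNReal_one])
  rw [Real.coe_toNNReal a ha.le, Real.coe_toNNReal b hb.le] at h
  rw [← ENNReal.coe_rpow_of_nonneg _ ha.le, ← ENNReal.coe_rpow_of_nonneg _ hb.le]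
  unfold ENNReal.ofReal
  exact_mod_cast h

lemma lintegral_eq_lintegral_measure_ofReal_lt {α : Type*} [MeasurableSpace α] (μ : Measure α)
    {u : α → ℝ≥0∞} (hu : Measurable u) (hu_top : ∀ x, u x ≠ ∞) :
    ∫⁻ x, u x ∂μ = ∫⁻ t in Set.Ioi (0 : ℝ), μ {x | ENNReal.ofReal t < u x} := by
  have h := lintegral_eq_lintegral_meas_lt μ (f := fun x => (u x).toReal)
    (ae_of_all _ fun x => ENNReal.toReal_nonneg) hu.ennreal_toReal.aemeasurable
  simp only [ENNReal.ofReal_toReal (hu_top _)] at h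
  rw [h]
  refine setLIntegral_congr_fun measurableSet_Ioi fun t ht => ?_
  simp only [ENNReal.ofReal_lt_iff_lt_toReal (le_of_lt ht) (hu_top _)]

lemma measurable_measure_ofReal_lt {α : Type*} [MeasurableSpace α] (μ : Measure α)
    (u : α → ℝ≥0∞) : Measurable fun t : ℝ => μ {x | ENNReal.ofReal t < u x} :=
  Antitone.measurable fun _ _ hst =>
    measure_mono fun _ hx => (ENNReal.ofReal_le_ofReal hst).trans_lt hx

variable {E F : Type*} [AddCommGroup E] [Module ℝ E] [MeasurableSpace E]
  [AddCommGroup F] [Module ℝ F] [MeasurableSpace F]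

/-- The measure `μ` satisfies the Prékopa–Leindler inequality, a functional form of the
Brunn–Minkowski inequality. -/
def PrekopaLeindler (μ : Measure E) : Prop :=
  ∀ ⦃a b : ℝ⦄, 0 < a → 0 < b → a + b = 1 → ∀ ⦃u v h : E → ℝ≥0∞⦄,
    Measurable u → Measurable v → Measurable h →
    (∀ x y, u x ^ a * v y ^ b ≤ h (a • x + b • y)) →
    (∫⁻ x, u x ∂μ) ^ a * (∫⁻ x, v x ∂μ) ^ b ≤ ∫⁻ x, h x ∂μ

section Line

variable {a b : ℝ} {u v h : ℝ → ℝ≥0∞}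

lemma volume_superlevel_add_le (ha : 0 < a) (hb : 0 < b) (hab : a + b = 1)
    (hu : Measurable u) (hv : Measurable v) (huvh : ∀ x y, u x ^ a * v y ^ b ≤ h (a • x + b • y))
    {r : ℝ≥0∞} (hur : ∃ x, r < u x) (hvr : ∃ x, r < v x) :
    ENNReal.ofReal a * volume {x | r < u x} + ENNReal.ofReal b * volume {x | r < v x} ≤
      volume {x | r < h x} := by
  have volume_smul {c : ℝ} (hc : 0 < c) (S : Set ℝ) :
      ENNReal.ofReal c * volume S = volume (c • S) := by
    simp [Measure.addHaar_smul, abs_of_pos hc]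
  rw [volume_smul ha, volume_smul hb]
  refine (volume_add_volume_le ((measurableSet_lt measurable_const hu).const_smul₀ a)
    ((measurableSet_lt measurable_const hv).const_smul₀ b)
    (Set.Nonempty.smul_set hur) (Set.Nonempty.smul_set hvr)).trans (measure_mono ?_)
  rintro _ ⟨_, ⟨x, hx : r < u x, rfl⟩, _, ⟨y, hy : r < v y, rfl⟩, rfl⟩
  calc r = r ^ a * r ^ b := by
        rw [← ENNReal.rpow_add_of_nonneg _ _ ha.le hb.le, hab, ENNReal.rpow_one]
    _ < u x ^ a * v y ^ b :=
        ENNReal.mul_lt_mul (ENNReal.rpow_lt_rpow hx ha) (ENNReal.rpow_lt_rpow hy hb)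
    _ ≤ h (a • x + b • y) := huvh x y

lemma prekopaLeindler_real_of_iSup_eq_one (ha : 0 < a) (hb : 0 < b) (hab : a + b = 1)
    (hu : Measurable u) (hv : Measurable v) (hh : Measurable h)
    (huvh : ∀ x y, u x ^ a * v y ^ b ≤ h (a • x + b • y))
    (hu₁ : ⨆ x, u x = 1) (hv₁ : ⨆ x, v x = 1) :
    (∫⁻ x, u x) ^ a * (∫⁻ x, v x) ^ b ≤ ∫⁻ x, h x := by
  have h_superlevel : ∀ t ∈ Set.Ioi (0 : ℝ),
      ENNReal.ofReal a * volume {x | ENNReal.ofReal t < u x} +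
        ENNReal.ofReal b * volume {x | ENNReal.ofReal t < v x} ≤
      volume {x | ENNReal.ofReal t < min (h x) 1} := by
    intro t _
    rcases lt_or_ge (ENNReal.ofReal t) 1 with ht | ht
    · simp only [lt_min_iff, ht, and_true]
      exact volume_superlevel_add_le ha hb hab hu hv huvh
        (lt_iSup_iff.1 (hu₁ ▸ ht)) (lt_iSup_iff.1 (hv₁ ▸ ht))
    · have hu_le (x) : ¬ ENNReal.ofReal t < u x :=
        (((le_iSup u x).trans_eq hu₁).trans ht).not_gt
      have hv_le (x) : ¬ ENNReal.ofReal t < v x :=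
        (((le_iSup v x).trans_eq hv₁).trans ht).not_gt
      simp [hu_le, hv_le]
  have ne_top_of_iSup {w : ℝ → ℝ≥0∞} (hw : ⨆ x, w x = 1) (x : ℝ) : w x ≠ ∞ :=
    ne_top_of_le_ne_top ENNReal.one_ne_top (hw ▸ le_iSup w x)
  calc (∫⁻ x, u x) ^ a * (∫⁻ x, v x) ^ b
      ≤ ENNReal.ofReal a * (∫⁻ x, u x) + ENNReal.ofReal b * ∫⁻ x, v x :=
        ennreal_geom_mean_le_arith_mean ha hb hab _ _
    _ = ∫⁻ t in Set.Ioi (0 : ℝ), (ENNReal.ofReal a * volume {x | ENNReal.ofReal t < u x} +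
          ENNReal.ofReal b * volume {x | ENNReal.ofReal t < v x}) := by
        rw [lintegral_add_left ((measurable_measure_ofReal_lt _ _).const_mul _),
          lintegral_const_mul _ (measurable_measure_ofReal_lt _ _),
          lintegral_const_mul _ (measurable_measure_ofReal_lt _ _),
          lintegral_eq_lintegral_measure_ofReal_lt _ hu (ne_top_of_iSup hu₁),
          lintegral_eq_lintegral_measure_ofReal_lt _ hv (ne_top_of_iSup hv₁)]
    _ ≤ ∫⁻ t in Set.Ioi (0 : ℝ), volume {x | ENNReal.ofReal t < min (h x) 1} :=
        setLIntegral_mono (measurable_measure_ofReal_lt _ _) h_superlevel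
    _ = ∫⁻ x, min (h x) 1 :=
        (lintegral_eq_lintegral_measure_ofReal_lt _ (hh.min measurable_const) fun x =>
          ne_top_of_le_ne_top ENNReal.one_ne_top (min_le_right _ _)).symm
    _ ≤ ∫⁻ x, h x := lintegral_mono fun x => min_le_left _ _

lemma prekopaLeindler_real_of_iSup_ne_top (ha : 0 < a) (hb : 0 < b) (hab : a + b = 1)
    (hu : Measurable u) (hv : Measurable v) (hh : Measurable h)
    (huvh : ∀ x y, u x ^ a * v y ^ b ≤ h (a • x + b • y))
    (hu_top : ⨆ x, u x ≠ ∞) (hv_top : ⨆ x, v x ≠ ∞) :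
    (∫⁻ x, u x) ^ a * (∫⁻ x, v x) ^ b ≤ ∫⁻ x, h x := by
  rcases eq_or_ne (⨆ x, u x) 0 with hu₀ | hu₀
  · simp [ENNReal.iSup_eq_zero.1 hu₀, ENNReal.zero_rpow_of_pos ha]
  rcases eq_or_ne (⨆ x, v x) 0 with hv₀ | hv₀
  · simp [ENNReal.iSup_eq_zero.1 hv₀, ENNReal.zero_rpow_of_pos hb]
  set M := ⨆ x, u x with hM
  set N := ⨆ x, v x with hN
  have mul_rpow_mul_mul_rpow (p q r s : ℝ≥0∞) :
      (p * q) ^ a * (r * s) ^ b = p ^ a * r ^ b * (q ^ a * s ^ b) := by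
    rw [ENNReal.mul_rpow_of_nonneg _ _ ha.le, ENNReal.mul_rpow_of_nonneg _ _ hb.le]
    ring
  have h_scaled := prekopaLeindler_real_of_iSup_eq_one ha hb hab
    (u := fun x => M⁻¹ * u x) (v := fun x => N⁻¹ * v x) (h := fun x => M⁻¹ ^ a * N⁻¹ ^ b * h x)
    (hu.const_mul _) (hv.const_mul _) (hh.const_mul _)
    (fun x y => by rw [mul_rpow_mul_mul_rpow]; gcongr; exact huvh x y)
    (by rw [← ENNReal.mul_iSup, ← hM, ENNReal.inv_mul_cancel hu₀ hu_top])
    (by rw [← ENNReal.mul_iSup, ← hN, ENNReal.inv_mul_cancel hv₀ hv_top])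
  rw [lintegral_const_mul _ hu, lintegral_const_mul _ hv, lintegral_const_mul _ hh,
    mul_rpow_mul_mul_rpow] at h_scaled
  clear_value M N
  refine (ENNReal.mul_le_mul_iff_right ?_ ?_).1 h_scaled
  · simp [hu₀, hv₀, hu_top, hv_top]
  · exact ENNReal.mul_ne_top (by simp [hu₀, ha.le]) (by simp [hv₀, hb.le])

lemma tendsto_lintegral_min_natCast {α : Type*} [MeasurableSpace α] (μ : Measure α)
    {u : α → ℝ≥0∞} (hu : Measurable u) :
    Filter.Tendsto (fun N : ℕ => ∫⁻ x, min (u x) N ∂μ) Filter.atTop (nhds (∫⁻ x, u x ∂μ)) := by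
  refine lintegral_tendsto_of_tendsto_of_monotone
    (fun N => (hu.min measurable_const).aemeasurable)
    (ae_of_all _ fun x M N hMN => min_le_min_left _ (Nat.cast_le.2 hMN))
    (ae_of_all _ fun x => ?_)
  simpa using tendsto_const_nhds.min ENNReal.tendsto_nat_nhds_top

theorem prekopaLeindler_real : PrekopaLeindler (volume : Measure ℝ) := by
  intro a b ha hb hab u v h hu hv hh huvh
  rcases eq_or_ne (∫⁻ x, u x) 0 with hu₀ | hu₀
  · simp [hu₀, ENNReal.zero_rpow_of_pos ha]
  rcases eq_or_ne (∫⁻ x, v x) 0 with hv₀ | hv₀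
  · simp [hv₀, ENNReal.zero_rpow_of_pos hb]
  have iSup_min_ne_top (w : ℝ → ℝ≥0∞) (N : ℕ) : ⨆ x, min (w x) N ≠ ∞ :=
    ne_top_of_le_ne_top (ENNReal.natCast_ne_top N) (iSup_le fun x => min_le_right _ _)
  have h_truncated (N : ℕ) : (∫⁻ x, min (u x) N) ^ a * (∫⁻ x, min (v x) N) ^ b ≤ ∫⁻ x, h x :=
    prekopaLeindler_real_of_iSup_ne_top ha hb hab (hu.min measurable_const)
      (hv.min measurable_const) hh
      (fun x y => le_trans (by gcongr <;> exact min_le_left _ _) (huvh x y))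
      (iSup_min_ne_top u N) (iSup_min_ne_top v N)
  exact le_of_tendsto' (ENNReal.Tendsto.mul
    ((tendsto_lintegral_min_natCast _ hu).ennrpow_const a) (Or.inl (by simp [hu₀, ha.le]))
    ((tendsto_lintegral_min_natCast _ hv).ennrpow_const b) (Or.inl (by simp [hv₀, hb.le])))
    h_truncated

end Line

namespace PrekopaLeindler

lemma prod {μ : Measure E} {ν : Measure F} [SFinite ν]
    (hμ : PrekopaLeindler μ) (hν : PrekopaLeindler ν) : PrekopaLeindler (μ.prod ν) := by
  intro a b ha hb hab u v h hu hv hh huvh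
  rw [lintegral_prod _ hu.aemeasurable, lintegral_prod _ hv.aemeasurable,
    lintegral_prod _ hh.aemeasurable]
  refine hμ ha hb hab hu.lintegral_prod_right' hv.lintegral_prod_right' hh.lintegral_prod_right'
    fun x x' => hν ha hb hab (by fun_prop) (by fun_prop) (by fun_prop) fun y y' => ?_
  exact huvh (x, y) (x', y')

lemma map {μ : Measure E} (hμ : PrekopaLeindler μ) (f : E →ₗ[ℝ] F) (hf : Measurable f) :
    PrekopaLeindler (μ.map f) := by
  intro a b ha hb hab u v h hu hv hh huvh
  rw [lintegral_map hu hf, lintegral_map hv hf, lintegral_map hh hf]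
  refine hμ ha hb hab (hu.comp hf) (hv.comp hf) (hh.comp hf) fun x y => ?_
  simpa only [Function.comp_apply, map_add, map_smul] using huvh (f x) (f y)

lemma smul {μ : Measure E} (hμ : PrekopaLeindler μ) (c : ℝ≥0∞) : PrekopaLeindler (c • μ) := by
  intro a b ha hb hab u v h hu hv hh huvh
  simp only [lintegral_smul_measure, smul_eq_mul]
  calc (c * ∫⁻ x, u x ∂μ) ^ a * (c * ∫⁻ x, v x ∂μ) ^ b
      = c ^ a * c ^ b * ((∫⁻ x, u x ∂μ) ^ a * (∫⁻ x, v x ∂μ) ^ b) := by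
        rw [ENNReal.mul_rpow_of_nonneg _ _ ha.le, ENNReal.mul_rpow_of_nonneg _ _ hb.le]
        ring
    _ = c * ((∫⁻ x, u x ∂μ) ^ a * (∫⁻ x, v x ∂μ) ^ b) := by
        rw [← ENNReal.rpow_add_of_nonneg _ _ ha.le hb.le, hab, ENNReal.rpow_one]
    _ ≤ c * ∫⁻ x, h x ∂μ := by gcongr; exact hμ ha hb hab hu hv hh huvh

end PrekopaLeindler

theorem prekopaLeindler_pi (n : ℕ) : PrekopaLeindler (volume : Measure (Fin n → ℝ)) := by
  induction n with
  | zero =>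
    intro a b _ _ _ u v h _ _ _ huvh
    have lintegral_eq (w : (Fin 0 → ℝ) → ℝ≥0∞) : ∫⁻ x, w x = w 0 := by
      rw [lintegral_unique, volume_pi, Measure.pi_empty_univ, mul_one]
      exact congrArg w (Subsingleton.elim _ _)
    simpa only [lintegral_eq, smul_zero, add_zero] using huvh 0 0
  | succ n ih =>
    let cons := (Fin.consLinearEquiv ℝ fun _ : Fin (n + 1) => ℝ).toLinearMap
    have hcons : MeasurePreserving cons := by
      convert (volume_preserving_piFinSuccAbove (fun _ : Fin (n + 1) => ℝ) 0).symm using 1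
      exact funext fun p => (Fin.insertNth_zero (α := fun _ => ℝ) p.1 p.2).symm
    rw [← hcons.map_eq]
    exact (prekopaLeindler_real.prod ih).map cons hcons.measurable

theorem prekopaLeindler_isAddHaarMeasure {E : Type*} [NormedAddCommGroup E] [NormedSpace ℝ E]
    [FiniteDimensional ℝ E] [MeasurableSpace E] [BorelSpace E] (μ : Measure E)
    [μ.IsAddHaarMeasure] : PrekopaLeindler μ := by
  let e : (Fin (Module.finrank ℝ E) → ℝ) ≃L[ℝ] E :=
    (ContinuousLinearEquiv.ofFinrankEq (Module.finrank_fin_fun ℝ))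
  have : (Measure.map e volume).IsAddHaarMeasure := e.isAddHaarMeasure_map volume
  rw [Measure.isAddLeftInvariant_eq_smul μ (Measure.map e volume)]
  exact ((prekopaLeindler_pi _).map e.toLinearEquiv.toLinearMap e.continuous.measurable).smul _

end PrekopaLeindler

section Entropy

lemma ofReal_exp_integral_le_lintegral {Ω : Type*} [MeasurableSpace Ω] {P : Measure Ω}
    [IsProbabilityMeasure P] {L : Ω → ℝ} (hL : Integrable L P) :
    ENNReal.ofReal (exp (∫ ω, L ω ∂P)) ≤ ∫⁻ ω, ENNReal.ofReal (exp (L ω)) ∂P := by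
  have hexp_nonneg : 0 ≤ᵐ[P] fun ω => exp (L ω) := ae_of_all _ fun ω => (exp_pos _).le
  have hexp_meas : AEStronglyMeasurable (fun ω => exp (L ω)) P :=
    (measurable_exp.comp_aemeasurable hL.aemeasurable).aestronglyMeasurable
  by_cases htop : ∫⁻ ω, ENNReal.ofReal (exp (L ω)) ∂P = ∞
  · exact htop ▸ le_top
  have hexp_int : Integrable (fun ω => exp (L ω)) P :=
    (lintegral_ofReal_ne_top_iff_integrable hexp_meas hexp_nonneg).1 htop
  rw [← ofReal_integral_eq_lintegral_ofReal hexp_int hexp_nonneg]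
  exact ENNReal.ofReal_le_ofReal <| convexOn_exp.map_integral_le continuous_exp.continuousOn
    isClosed_univ (ae_of_all _ fun _ => Set.mem_univ _) hL hexp_int

lemma integral_nonpos_of_lintegral_exp_le_one {Ω : Type*} [MeasurableSpace Ω] {P : Measure Ω}
    [IsProbabilityMeasure P] {L : Ω → ℝ} (hL : Integrable L P)
    (hL_exp : ∫⁻ ω, ENNReal.ofReal (exp (L ω)) ∂P ≤ 1) : ∫ ω, L ω ∂P ≤ 0 :=
  exp_le_one_iff.1 <| ENNReal.ofReal_le_one.1 <|
    (ofReal_exp_integral_le_lintegral hL).trans hL_exp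

lemma ofReal_exp_log_toReal {x : ℝ≥0∞} (hx : 0 < x.toReal) :
    ENNReal.ofReal (exp (log x.toReal)) = x := by
  rw [exp_log hx, ENNReal.ofReal_toReal (ENNReal.toReal_pos_iff.1 hx).2.ne]

lemma ofReal_exp_neg_log_toReal {x : ℝ≥0∞} (hx : 0 < x.toReal) :
    ENNReal.ofReal (exp (-log x.toReal)) = x⁻¹ := by
  rw [exp_neg, ENNReal.ofReal_inv_of_pos (exp_pos _), ofReal_exp_log_toReal hx]

lemma lintegral_inv_mul_withDensity_le {α : Type*} [MeasurableSpace α] (μ : Measure α)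
    {g φ : α → ℝ≥0∞} (hg : Measurable g) (hφ : Measurable φ) :
    ∫⁻ x, (g x)⁻¹ * φ x ∂(μ.withDensity g) ≤ ∫⁻ x, φ x ∂μ := by
  rw [lintegral_withDensity_eq_lintegral_mul μ hg (by fun_prop)]
  refine lintegral_mono fun x => ?_
  calc g x * ((g x)⁻¹ * φ x) = g x * (g x)⁻¹ * φ x := (mul_assoc _ _ _).symm
    _ ≤ 1 * φ x := by gcongr; exact ENNReal.mul_inv_le_one _
    _ = φ x := one_mul _

/-- The differential entropy, with respect to `μ`, of the probability measure with density `g`. It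
is written as an integral against that measure rather than as `-∫ g log g`. -/
noncomputable def diffEntropy {α : Type*} [MeasurableSpace α] (μ : Measure α) (g : α → ℝ≥0∞) : ℝ :=
  -∫ x, log (g x).toReal ∂(μ.withDensity g)

/-- `g` is a bounded probability density with respect to `μ`, vanishing outside `K`. Boundedness
together with `μ K < ∞` guarantees a finite differential entropy. -/
structure IsBoundedDensityOn {α : Type*} [MeasurableSpace α] (μ : Measure α) (K : Set α)
    (g : α → ℝ≥0∞) : Prop where
  measurable : Measurable g
  exists_le : ∃ C : NNReal, ∀ x, g x ≤ C
  lintegral_eq_one : ∫⁻ x, g x ∂μ = 1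
  eq_zero : ∀ x ∉ K, g x = 0

namespace IsBoundedDensityOn

variable {α : Type*} [MeasurableSpace α] {μ : Measure α} {K : Set α} {g : α → ℝ≥0∞}

lemma ne_top (hg : IsBoundedDensityOn μ K g) (x : α) : g x ≠ ∞ := by
  obtain ⟨C, hC⟩ := hg.exists_le
  exact ne_top_of_le_ne_top ENNReal.coe_ne_top (hC x)

lemma isProbabilityMeasure (hg : IsBoundedDensityOn μ K g) :
    IsProbabilityMeasure (μ.withDensity g) :=
  ⟨by rw [withDensity_apply _ .univ, setLIntegral_univ, hg.lintegral_eq_one]⟩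

lemma ae_toReal_pos (hg : IsBoundedDensityOn μ K g) :
    ∀ᵐ x ∂(μ.withDensity g), 0 < (g x).toReal :=
  (ae_withDensity_iff hg.measurable).2 <|
    ae_of_all _ fun x hx => ENNReal.toReal_pos hx (hg.ne_top x)

lemma integrable_log (hg : IsBoundedDensityOn μ K g) (hK : μ K ≠ ∞) :
    Integrable (fun x => log (g x).toReal) (μ.withDensity g) := by
  have hgm := hg.measurable
  obtain ⟨C, hC⟩ := hg.exists_le
  obtain ⟨M, hM⟩ : ∃ M, ∀ t ∈ Set.Icc (0 : ℝ) C, ‖t * log t‖ ≤ M :=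
    isCompact_Icc.exists_bound_of_continuousOn continuous_mul_log.continuousOn
  rw [integrable_withDensity_iff hgm (ae_of_all _ fun x => (hg.ne_top x).lt_top),
    ← integrableOn_iff_integrable_of_support_subset (s := K)]
  · refine IntegrableOn.of_bound hK.lt_top (by fun_prop) M (ae_of_all _ fun x => ?_)
    rw [mul_comm]
    exact hM _ ⟨ENNReal.toReal_nonneg, ENNReal.toReal_mono ENNReal.coe_ne_top (hC x)⟩
  · refine Function.support_subset_iff'.2 fun x hx => ?_
    rw [hg.eq_zero x hx, ENNReal.toReal_zero, mul_zero]

section MeasurePreserving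

variable {Ω : Type*} [MeasurableSpace Ω] {P : Measure Ω} {X : Ω → α}

lemma integrable_log_comp (hg : IsBoundedDensityOn μ K g) (hK : μ K ≠ ∞)
    (hX : MeasurePreserving X P (μ.withDensity g)) :
    Integrable (fun ω => log (g (X ω)).toReal) P :=
  hX.integrable_comp_of_integrable (hg.integrable_log hK)

lemma ae_toReal_comp_pos (hg : IsBoundedDensityOn μ K g)
    (hX : MeasurePreserving X P (μ.withDensity g)) : ∀ᵐ ω ∂P, 0 < (g (X ω)).toReal :=
  hX.quasiMeasurePreserving.ae hg.ae_toReal_pos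

lemma integral_log_comp (hg : IsBoundedDensityOn μ K g)
    (hX : MeasurePreserving X P (μ.withDensity g)) :
    ∫ ω, log (g (X ω)).toReal ∂P = -diffEntropy μ g := by
  have hgm := hg.measurable
  have hlog : Measurable fun x => log (g x).toReal := by fun_prop
  rw [diffEntropy, neg_neg, ← hX.map_eq,
    integral_map hX.measurable.aemeasurable hlog.aestronglyMeasurable]

end MeasurePreserving

theorem diffEntropy_le_log_measure (hg : IsBoundedDensityOn μ K g) (hKm : MeasurableSet K)
    (hK₀ : μ K ≠ 0) (hK : μ K ≠ ∞) : diffEntropy μ g ≤ log (μ K).toReal := by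
  have := hg.isProbabilityMeasure
  have hgm := hg.measurable
  have hind : Measurable (K.indicator fun _ => (μ K)⁻¹) := measurable_const.indicator hKm
  have hKpos : 0 < (μ K).toReal := ENNReal.toReal_pos hK₀ hK
  have hint : Integrable (fun x => -log (g x).toReal) (μ.withDensity g) :=
    (hg.integrable_log hK).neg
  have hexp : ∀ᵐ x ∂(μ.withDensity g), ENNReal.ofReal (exp (-log (g x).toReal + -log (μ K).toReal))
      = (g x)⁻¹ * K.indicator (fun _ => (μ K)⁻¹) x := by
    filter_upwards [hg.ae_toReal_pos] with x hx
    have hxK : x ∈ K := by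
      by_contra hxK
      simp [hg.eq_zero x hxK] at hx
    rw [exp_add, ENNReal.ofReal_mul (exp_pos _).le, ofReal_exp_neg_log_toReal hx,
      ofReal_exp_neg_log_toReal hKpos, Set.indicator_of_mem hxK]
  have hlog_le : ∫ x, (-log (g x).toReal + -log (μ K).toReal) ∂(μ.withDensity g) ≤ 0 := by
    refine integral_nonpos_of_lintegral_exp_le_one (hint.add (integrable_const _)) ?_
    calc ∫⁻ x, ENNReal.ofReal (exp (-log (g x).toReal + -log (μ K).toReal)) ∂(μ.withDensity g)
        = ∫⁻ x, (g x)⁻¹ * K.indicator (fun _ => (μ K)⁻¹) x ∂(μ.withDensity g) :=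
          lintegral_congr_ae hexp
      _ ≤ ∫⁻ x, K.indicator (fun _ => (μ K)⁻¹) x ∂μ := lintegral_inv_mul_withDensity_le μ hgm hind
      _ = 1 := by rw [lintegral_indicator_const hKm, ENNReal.inv_mul_cancel hK₀ hK]
  rw [integral_add hint (integrable_const _), integral_neg, integral_const, probReal_univ,
    one_smul] at hlog_le
  rw [diffEntropy]
  linarith

end IsBoundedDensityOn

section Convolution

variable {G : Type*} [AddCommGroup G] [MeasurableSpace G] [MeasurableAdd₂ G] [MeasurableNeg G]
  {μ : Measure G} [SFinite μ] [μ.IsAddLeftInvariant] {f g k : G → ℝ≥0∞} {K L M : Set G}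

lemma lintegral_lconvolution (hf : Measurable f) (hg : Measurable g) :
    ∫⁻ x, (f ⋆ₗ[μ] g) x ∂μ = (∫⁻ x, f x ∂μ) * ∫⁻ x, g x ∂μ := by
  simp only [lconvolution_def]
  rw [lintegral_lintegral_swap (by fun_prop), ← lintegral_mul_const _ hf]
  refine lintegral_congr fun y => ?_
  rw [lintegral_const_mul _ (by fun_prop), lintegral_add_left_eq_self]

lemma IsBoundedDensityOn.lconvolution (hf : IsBoundedDensityOn μ K f)
    (hg : IsBoundedDensityOn μ L g) : IsBoundedDensityOn μ (K + L) (f ⋆ₗ[μ] g) := by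
  obtain ⟨C, hC⟩ := hg.exists_le
  refine ⟨measurable_lconvolution μ hf.measurable hg.measurable, ⟨C, fun x => ?_⟩, ?_,
    fun x hx => ?_⟩
  · calc ∫⁻ y, f y * g (-y + x) ∂μ
        ≤ ∫⁻ y, f y * C ∂μ := by gcongr; exact hC _
      _ = C := by rw [lintegral_mul_const _ hf.measurable, hf.lintegral_eq_one, one_mul]
  · rw [lintegral_lconvolution hf.measurable hg.measurable, hf.lintegral_eq_one,
      hg.lintegral_eq_one, one_mul]
  · have hzero (y : G) : f y * g (-y + x) = 0 := by
      by_cases hy : y ∈ K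
      · have hyx : -y + x ∉ L := fun hyx =>
          hx (add_neg_cancel_left y x ▸ Set.add_mem_add hy hyx)
        rw [hg.eq_zero _ hyx, mul_zero]
      · rw [hf.eq_zero y hy, zero_mul]
    simp only [lconvolution_def, hzero, lintegral_zero]

lemma measurePreserving_add_withDensity (hf : Measurable f) (hg : Measurable g) :
    MeasurePreserving (fun p : G × G => p.1 + p.2) ((μ.withDensity f).prod (μ.withDensity g))
      (μ.withDensity (f ⋆ₗ[μ] g)) :=
  ⟨by fun_prop, conv_withDensity_eq_lconvolution hf hg⟩

lemma measurePreserving_add_comp_withDensity {H : Type*} [MeasurableSpace H] {ρ : Measure H}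
    [SFinite ρ] {Y : H → G} (hf : Measurable f) (hg : Measurable g)
    (hY : MeasurePreserving Y ρ (μ.withDensity g)) :
    MeasurePreserving (fun p : G × H => p.1 + Y p.2) ((μ.withDensity f).prod ρ)
      (μ.withDensity (f ⋆ₗ[μ] g)) :=
  (measurePreserving_add_withDensity hf hg).comp ((MeasurePreserving.id _).prod hY)

omit [MeasurableNeg G] in
lemma lintegral_prod_add_right {H : Type*} [MeasurableSpace H] {ρ : Measure H} [SFinite ρ]
    {φ : G × H → ℝ≥0∞} (hφ : Measurable φ) {c : H → G} (hc : Measurable c) :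
    ∫⁻ p, φ (p.1 + c p.2, p.2) ∂(μ.prod ρ) = ∫⁻ p, φ p ∂(μ.prod ρ) := by
  rw [lintegral_prod_symm _ (by fun_prop), lintegral_prod_symm _ hφ.aemeasurable]
  exact lintegral_congr fun y => lintegral_add_right_eq_self (fun x => φ (x, y)) (c y)

variable [μ.IsNegInvariant]

lemma lconvolution_left_comm (hf : Measurable f) (hg : Measurable g)
    (hk : Measurable k) : f ⋆ₗ[μ] (g ⋆ₗ[μ] k) = g ⋆ₗ[μ] (f ⋆ₗ[μ] k) := by
  rw [lconvolution_assoc hf hg hk, lconvolution_comm (f := f), ← lconvolution_assoc hg hf hk]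

lemma lintegral_lconvolution_mul_lconvolution_mul_inv_le (hf : Measurable f) (hg : Measurable g)
    (hk : Measurable k) :
    ∫⁻ p : G × G × G, (f ⋆ₗ[μ] k) (p.1 + p.2.2) * (f ⋆ₗ[μ] g) (p.1 + p.2.1) *
        ((f ⋆ₗ[μ] (g ⋆ₗ[μ] k)) (p.1 + (p.2.1 + p.2.2)))⁻¹
      ∂(μ.prod ((μ.withDensity g).prod (μ.withDensity k))) ≤
    ∫⁻ x, (f ⋆ₗ[μ] (g ⋆ₗ[μ] k)) x ∂μ := by
  set F := f ⋆ₗ[μ] (g ⋆ₗ[μ] k)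
  have hfk : Measurable (f ⋆ₗ[μ] k) := measurable_lconvolution μ hf hk
  have hfg : Measurable (f ⋆ₗ[μ] g) := measurable_lconvolution μ hf hg
  have hFm : Measurable F := measurable_lconvolution μ hf (measurable_lconvolution μ hg hk)
  have lintegral_neg_add {u v : G → ℝ≥0∞} (hu : Measurable u) (hv : Measurable v) (x : G) :
      ∫⁻ y, v (-y + x) ∂(μ.withDensity u) = (u ⋆ₗ[μ] v) x :=
    lintegral_withDensity_eq_lintegral_mul μ hu (by fun_prop)
  have hgF : g ⋆ₗ[μ] (f ⋆ₗ[μ] k) = F := lconvolution_left_comm hg hf hk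
  have hkF : k ⋆ₗ[μ] (f ⋆ₗ[μ] g) = F := by
    rw [lconvolution_comm, ← lconvolution_assoc hf hg hk]
  calc _ = ∫⁻ p : G × G × G, (f ⋆ₗ[μ] k) (-p.2.1 + p.1) * (f ⋆ₗ[μ] g) (-p.2.2 + p.1) * (F p.1)⁻¹
          ∂(μ.prod ((μ.withDensity g).prod (μ.withDensity k))) := by
        refine Eq.trans (lintegral_congr fun p => ?_) (lintegral_prod_add_right
          (φ := fun p : G × G × G =>
            (f ⋆ₗ[μ] k) (-p.2.1 + p.1) * (f ⋆ₗ[μ] g) (-p.2.2 + p.1) * (F p.1)⁻¹)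
          (by fun_prop) (c := fun q => q.1 + q.2) (by fun_prop))
        dsimp only
        congr 3 <;> abel
    _ = ∫⁻ x, (∫⁻ q : G × G, (f ⋆ₗ[μ] k) (-q.1 + x) * (f ⋆ₗ[μ] g) (-q.2 + x)
          ∂((μ.withDensity g).prod (μ.withDensity k))) * (F x)⁻¹ ∂μ := by
        rw [lintegral_prod _ (by fun_prop)]
        refine lintegral_congr fun x => ?_
        dsimp only
        rw [lintegral_mul_const _ (by fun_prop)]
    _ = ∫⁻ x, F x * F x * (F x)⁻¹ ∂μ := by
        refine lintegral_congr fun x => ?_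
        rw [lintegral_prod_mul (f := fun y => (f ⋆ₗ[μ] k) (-y + x))
          (g := fun z => (f ⋆ₗ[μ] g) (-z + x)) (by fun_prop) (by fun_prop),
          lintegral_neg_add hg hfk, lintegral_neg_add hk hfg, hgF, hkF]
    _ ≤ ∫⁻ x, F x ∂μ := by
        refine lintegral_mono fun x => ?_
        rw [mul_assoc]
        exact mul_le_of_le_one_right' (ENNReal.mul_inv_le_one _)

lemma lintegral_inv_mul_lconvolution_ratio_le_one (hf : IsBoundedDensityOn μ K f)
    (hg : IsBoundedDensityOn μ L g) (hk : IsBoundedDensityOn μ M k) :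
    ∫⁻ p : G × G × G, (f p.1)⁻¹ * ((f ⋆ₗ[μ] k) (p.1 + p.2.2) * (f ⋆ₗ[μ] g) (p.1 + p.2.1) *
        ((f ⋆ₗ[μ] (g ⋆ₗ[μ] k)) (p.1 + (p.2.1 + p.2.2)))⁻¹)
      ∂((μ.withDensity f).prod ((μ.withDensity g).prod (μ.withDensity k))) ≤ 1 := by
  have hfm := hf.measurable
  have hfg := (hf.lconvolution hg).measurable
  have hfk := (hf.lconvolution hk).measurable
  have hF := hf.lconvolution (hg.lconvolution hk)
  have hFm := hF.measurable
  rw [prod_withDensity_left hf.measurable]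
  calc _ ≤ ∫⁻ p : G × G × G, (f ⋆ₗ[μ] k) (p.1 + p.2.2) * (f ⋆ₗ[μ] g) (p.1 + p.2.1) *
        ((f ⋆ₗ[μ] (g ⋆ₗ[μ] k)) (p.1 + (p.2.1 + p.2.2)))⁻¹
          ∂(μ.prod ((μ.withDensity g).prod (μ.withDensity k))) :=
        lintegral_inv_mul_withDensity_le _ (by fun_prop) (by fun_prop)
    _ ≤ ∫⁻ x, (f ⋆ₗ[μ] (g ⋆ₗ[μ] k)) x ∂μ :=
        lintegral_lconvolution_mul_lconvolution_mul_inv_le hf.measurable hg.measurable hk.measurable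
    _ = 1 := hF.lintegral_eq_one

theorem diffEntropy_lconvolution_add_le (hf : IsBoundedDensityOn μ K f)
    (hg : IsBoundedDensityOn μ L g) (hk : IsBoundedDensityOn μ M k) (hK : μ K ≠ ∞)
    (hKL : μ (K + L) ≠ ∞) (hKM : μ (K + M) ≠ ∞) (hKLM : μ (K + (L + M)) ≠ ∞) :
    diffEntropy μ (f ⋆ₗ[μ] (g ⋆ₗ[μ] k)) + diffEntropy μ f ≤
      diffEntropy μ (f ⋆ₗ[μ] g) + diffEntropy μ (f ⋆ₗ[μ] k) := by
  have hgk := hg.lconvolution hk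
  have hfg := hf.lconvolution hg
  have hfk := hf.lconvolution hk
  have hF := hf.lconvolution hgk
  have := hf.isProbabilityMeasure
  have := hg.isProbabilityMeasure
  have := hk.isProbabilityMeasure
  have hX := measurePreserving_fst (μ := μ.withDensity f)
    (ν := (μ.withDensity g).prod (μ.withDensity k))
  have hXY := measurePreserving_add_comp_withDensity hf.measurable hg.measurable
    (measurePreserving_fst (μ := μ.withDensity g) (ν := μ.withDensity k))
  have hXZ := measurePreserving_add_comp_withDensity hf.measurable hk.measurable
    (measurePreserving_snd (μ := μ.withDensity g) (ν := μ.withDensity k))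
  have hXYZ := measurePreserving_add_comp_withDensity hf.measurable hgk.measurable
    (measurePreserving_add_withDensity hg.measurable hk.measurable)
  have hintX := (hf.integrable_log_comp hK hX).neg
  have hintXZ := hfk.integrable_log_comp hKM hXZ
  have hintXY := hfg.integrable_log_comp hKL hXY
  have hintXYZ := (hF.integrable_log_comp hKLM hXYZ).neg
  have hlog_le := integral_nonpos_of_lintegral_exp_le_one
    (hintX.add ((hintXZ.add hintXY).add hintXYZ)) <| by
      refine (lintegral_congr_ae ?_).trans_le
        (lintegral_inv_mul_lconvolution_ratio_le_one hf hg hk)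
      filter_upwards [hf.ae_toReal_comp_pos hX, hfk.ae_toReal_comp_pos hXZ,
        hfg.ae_toReal_comp_pos hXY, hF.ae_toReal_comp_pos hXYZ] with p hpX hpXZ hpXY hpXYZ
      simp only [Pi.add_apply, Pi.neg_apply, exp_add, ENNReal.ofReal_mul, exp_nonneg, mul_nonneg,
        ofReal_exp_neg_log_toReal hpX, ofReal_exp_log_toReal hpXZ, ofReal_exp_log_toReal hpXY,
        ofReal_exp_neg_log_toReal hpXYZ]
  rw [integral_add' hintX ((hintXZ.add hintXY).add hintXYZ),
    integral_add' (hintXZ.add hintXY) hintXYZ, integral_add' hintXZ hintXY, integral_neg',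
    integral_neg', hf.integral_log_comp hX, hfk.integral_log_comp hXZ, hfg.integral_log_comp hXY,
    hF.integral_log_comp hXYZ] at hlog_le
  linarith

end Convolution

end Entropy

section ReverseEntropy

/-- A form of concavity of `g ^ (1 / p)` along segments with an endpoint in `K`: the term coming
from that endpoint is dropped from the lower bound, and the resulting inequality
`b * g s ^ (1 / p) ≤ g (a • t + b • s) ^ (1 / p)` is raised to the power `p`, so that `p = 0` is
allowed. -/
def PowStarConcave {E : Type*} [AddCommGroup E] [Module ℝ E] (p : ℝ) (K : Set E) (g : E → ℝ≥0∞) :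
    Prop :=
  ∀ ⦃a b : ℝ⦄, 0 < a → 0 < b → a + b = 1 → ∀ t ∈ K, ∀ s,
    ENNReal.ofReal b ^ p * g s ≤ g (a • t + b • s)

variable {E : Type*} [NormedAddCommGroup E] [NormedSpace ℝ E] [FiniteDimensional ℝ E]
  [MeasurableSpace E] [BorelSpace E] {μ : Measure E} [μ.IsAddHaarMeasure]

lemma ofReal_pow_finrank_mul_lintegral_smul_add {c : ℝ} (hc : 0 < c) (v : E) {φ : E → ℝ≥0∞}
    (hφ : Measurable φ) :
    ENNReal.ofReal c ^ Module.finrank ℝ E * ∫⁻ x, φ (c • x + v) ∂μ = ∫⁻ x, φ x ∂μ := by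
  have hc₀ : ENNReal.ofReal c ^ Module.finrank ℝ E ≠ 0 := by simp [hc]
  have hc₁ : ENNReal.ofReal c ^ Module.finrank ℝ E ≠ ∞ := by simp
  rw [← lintegral_map (f := fun x => φ (x + v)) (g := fun x => c • x) (by fun_prop) (by fun_prop),
    Measure.map_addHaar_smul _ hc.ne', lintegral_smul_measure, lintegral_add_right_eq_self φ v,
    abs_of_pos (by positivity), ENNReal.ofReal_inv_of_pos (by positivity),
    ENNReal.ofReal_pow hc.le, smul_eq_mul, ← mul_assoc, ENNReal.mul_inv_cancel hc₀ hc₁, one_mul]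

lemma PowStarConcave.lconvolution {p q : ℝ} (hp : 0 ≤ p) (hq : 0 ≤ q) {K L : Set E}
    {f g : E → ℝ≥0∞} (hfm : Measurable f) (hgm : Measurable g) (hf : PowStarConcave p K f)
    (hg : PowStarConcave q L g) :
    PowStarConcave (Module.finrank ℝ E + (p + q)) (K + L) (f ⋆ₗ[μ] g) := by
  rintro a b ha hb hab _ ⟨t, ht, t', ht', rfl⟩ s
  set φ : E → ℝ≥0∞ := fun y => f y * g (-y + (a • (t + t') + b • s))
  have hφ : Measurable φ := by fun_prop
  change _ ≤ ∫⁻ y, φ y ∂μ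
  rw [← ofReal_pow_finrank_mul_lintegral_smul_add hb (a • t) hφ,
    ENNReal.rpow_add_of_nonneg _ _ (Nat.cast_nonneg _) (add_nonneg hp hq), ENNReal.rpow_natCast,
    mul_assoc, lconvolution_def, ← lintegral_const_mul _ (by fun_prop)]
  gcongr with y
  calc ENNReal.ofReal b ^ (p + q) * (f y * g (-y + s))
      = (ENNReal.ofReal b ^ p * f y) * (ENNReal.ofReal b ^ q * g (-y + s)) := by
        rw [ENNReal.rpow_add_of_nonneg _ _ hp hq, mul_mul_mul_comm]
    _ ≤ f (a • t + b • y) * g (a • t' + b • (-y + s)) := by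
        gcongr
        · exact hf ha hb hab t ht y
        · exact hg ha hb hab t' ht' (-y + s)
    _ = φ (b • y + a • t) := by
        simp only [φ]
        rw [add_comm (a • t)]
        congr 2
        module

variable {p : ℝ} {K L : Set E} {g : E → ℝ≥0∞}

lemma PowStarConcave.measure_rpow_mul_lintegral_rpow_le (hg : PowStarConcave p K g)
    (hgm : Measurable g) (hK : MeasurableSet K) {a b a' b' : ℝ} (ha : 0 < a) (hb : 0 < b)
    (hab : a + b = 1) (ha' : 0 < a') (hb' : 0 < b') (hab' : a' + b' = 1) :
    ENNReal.ofReal b' ^ p * (μ K ^ a * (∫⁻ x, g x ^ (1 / b) ∂μ) ^ b) ≤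
      (ENNReal.ofReal (a / a') ^ Module.finrank ℝ E) ^ a *
        (ENNReal.ofReal (b / b') ^ Module.finrank ℝ E) ^ b * ∫⁻ x, g x ∂μ := by
  have hKm : Measurable (K.indicator (1 : E → ℝ≥0∞)) := measurable_one.indicator hK
  have hb'₀ : ENNReal.ofReal b' ^ p ≠ 0 := by simp [hb']
  have hb'₁ : ENNReal.ofReal b' ^ p ≠ ∞ := by simp [hb']
  have hPL : (∫⁻ x, K.indicator 1 ((a / a') • x + 0) ∂μ) ^ a *
      (∫⁻ y, g ((b / b') • y + 0) ^ (1 / b) ∂μ) ^ b ≤ ∫⁻ z, (ENNReal.ofReal b' ^ p)⁻¹ * g z ∂μ := by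
    refine prekopaLeindler_isAddHaarMeasure μ ha hb hab (hKm.comp (by fun_prop)) (by fun_prop)
      (by fun_prop) fun x y => ?_
    by_cases hx : (a / a') • x + 0 ∈ K
    · rw [Set.indicator_of_mem hx, Pi.one_apply, ENNReal.one_rpow, one_mul, ← ENNReal.rpow_mul,
        one_div_mul_cancel hb.ne', ENNReal.rpow_one, ← ENNReal.mul_le_iff_le_inv hb'₀ hb'₁]
      convert hg ha' hb' hab' _ hx ((b / b') • y + 0) using 2
      rw [add_zero, add_zero, smul_smul, smul_smul, mul_div_cancel₀ _ ha'.ne',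
        mul_div_cancel₀ _ hb'.ne']
    · rw [Set.indicator_of_notMem hx, ENNReal.zero_rpow_of_pos ha, zero_mul]
      exact zero_le
  rw [lintegral_const_mul _ hgm, ← ENNReal.mul_le_iff_le_inv hb'₀ hb'₁] at hPL
  rw [← lintegral_indicator_one hK,
    ← ofReal_pow_finrank_mul_lintegral_smul_add (μ := μ) (div_pos ha ha') 0 hKm,
    ← ofReal_pow_finrank_mul_lintegral_smul_add (div_pos hb hb') 0
      (φ := fun x => g x ^ (1 / b)) (by fun_prop)]
  rw [ENNReal.mul_rpow_of_nonneg _ _ ha.le, ENNReal.mul_rpow_of_nonneg _ _ hb.le, mul_mul_mul_comm,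
    mul_left_comm]
  gcongr

lemma IsBoundedDensityOn.ofReal_exp_neg_mul_diffEntropy_le {α : Type*} [MeasurableSpace α]
    {μ : Measure α} {L : Set α} {g : α → ℝ≥0∞} (hg : IsBoundedDensityOn μ L g) (hL : μ L ≠ ∞)
    {c : ℝ} (hc : 0 ≤ c) :
    ENNReal.ofReal (exp (-(c * diffEntropy μ g))) ≤ ∫⁻ x, g x ^ (1 + c) ∂μ := by
  have := hg.isProbabilityMeasure
  have hgm := hg.measurable
  have hexp : ∀ᵐ x ∂(μ.withDensity g), ENNReal.ofReal (exp (c * log (g x).toReal)) = g x ^ c := by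
    filter_upwards [hg.ae_toReal_pos] with x hx
    rw [mul_comm, exp_mul, ← ENNReal.ofReal_rpow_of_pos (exp_pos _), ofReal_exp_log_toReal hx]
  calc ENNReal.ofReal (exp (-(c * diffEntropy μ g)))
      = ENNReal.ofReal (exp (∫ x, c * log (g x).toReal ∂(μ.withDensity g))) := by
        rw [integral_const_mul, diffEntropy, mul_neg, neg_neg]
    _ ≤ ∫⁻ x, ENNReal.ofReal (exp (c * log (g x).toReal)) ∂(μ.withDensity g) :=
        ofReal_exp_integral_le_lintegral ((hg.integrable_log hL).const_mul c)
    _ = ∫⁻ x, g x * g x ^ c ∂μ := by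
        rw [lintegral_congr_ae hexp, lintegral_withDensity_eq_lintegral_mul _ hgm (by fun_prop)]
        rfl
    _ = ∫⁻ x, g x ^ (1 + c) ∂μ := by
        simp only [ENNReal.rpow_add_of_nonneg _ _ zero_le_one hc, ENNReal.rpow_one]

lemma PowStarConcave.mul_log_measure_le (hg : PowStarConcave p K g)
    (hgL : IsBoundedDensityOn μ L g) (hL : μ L ≠ ∞) (hK : MeasurableSet K) (hK₀ : μ K ≠ 0)
    (hK₁ : μ K ≠ ∞) {a b a' b' : ℝ} (ha : 0 < a) (hb : 0 < b) (hab : a + b = 1) (ha' : 0 < a')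
    (hb' : 0 < b') (hab' : a' + b' = 1) :
    a * log (μ K).toReal + p * log b' ≤ a * diffEntropy μ g +
      Module.finrank ℝ E * (a * log (a / a') + b * log (b / b')) := by
  have hKpos : 0 < (μ K).toReal := ENNReal.toReal_pos hK₀ hK₁
  have hmoment := hgL.ofReal_exp_neg_mul_diffEntropy_le hL (c := a / b) (by positivity)
  rw [one_add_div hb.ne', add_comm b, hab] at hmoment
  have hle : ENNReal.ofReal (b' ^ p * ((μ K).toReal ^ a *
      exp (-(a / b * diffEntropy μ g)) ^ b)) ≤ ENNReal.ofReal
      (((a / a') ^ Module.finrank ℝ E) ^ a * ((b / b') ^ Module.finrank ℝ E) ^ b) := by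
    calc _ = ENNReal.ofReal b' ^ p * (μ K ^ a *
          ENNReal.ofReal (exp (-(a / b * diffEntropy μ g))) ^ b) := by
          rw [ENNReal.ofReal_mul (by positivity), ENNReal.ofReal_mul (by positivity),
            ← ENNReal.ofReal_rpow_of_pos hb', ← ENNReal.ofReal_rpow_of_pos hKpos,
            ← ENNReal.ofReal_rpow_of_pos (exp_pos _), ENNReal.ofReal_toReal hK₁]
      _ ≤ (ENNReal.ofReal (a / a') ^ Module.finrank ℝ E) ^ a *
          (ENNReal.ofReal (b / b') ^ Module.finrank ℝ E) ^ b * ∫⁻ x, g x ∂μ := by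
          refine le_trans ?_ (hg.measure_rpow_mul_lintegral_rpow_le hgL.measurable hK ha hb hab
            ha' hb' hab')
          gcongr
      _ = _ := by
          rw [hgL.lintegral_eq_one, mul_one, ENNReal.ofReal_mul (by positivity),
            ← ENNReal.ofReal_rpow_of_pos (by positivity),
            ← ENNReal.ofReal_rpow_of_pos (by positivity), ENNReal.ofReal_pow (by positivity),
            ENNReal.ofReal_pow (by positivity)]
  have hlog := log_le_log (by positivity) ((ENNReal.ofReal_le_ofReal_iff (by positivity)).1 hle)
  rw [log_mul (by positivity) (by positivity), log_mul (by positivity) (by positivity),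
    log_mul (by positivity) (by positivity), log_rpow hb', log_rpow hKpos, log_rpow (exp_pos _),
    log_rpow (by positivity), log_rpow (by positivity), log_exp, log_pow, log_pow] at hlog
  have hcancel : b * (a / b * diffEntropy μ g) = a * diffEntropy μ g := by field_simp
  linarith

lemma mul_log_sub_mul_log_le_sq {q a : ℝ} (hq : 0 ≤ q) (ha : a < 1) :
    (1 - a) * log (1 - a) - (1 - a + q) * log (1 - a / (1 + q)) ≤ a ^ 2 := by
  have hb : 0 < 1 - a := sub_pos.2 ha
  have hb' : 0 < 1 - a / (1 + q) := sub_pos.2 ((div_lt_one (by positivity)).2 (by linarith))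
  have hlog : (1 - a) * log (1 - a) ≤ (1 - a) * -a :=
    mul_le_mul_of_nonneg_left (by linarith [log_le_sub_one_of_pos hb]) hb.le
  have hlog' : (1 - a + q) * -log (1 - a / (1 + q)) ≤ a := by
    calc (1 - a + q) * -log (1 - a / (1 + q))
        ≤ (1 - a + q) * ((1 - a / (1 + q))⁻¹ - 1) := by
          rw [← log_inv]
          exact mul_le_mul_of_nonneg_left (log_le_sub_one_of_pos (inv_pos.2 hb')) (by linarith)
      _ = a := by
          have : 1 + q - a ≠ 0 := by linarith
          field_simp
          ring
  linarith

theorem PowStarConcave.log_measure_sub_le_diffEntropy {q : ℝ} (hq : 0 ≤ q)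
    (hg : PowStarConcave (Module.finrank ℝ E * q) K g) (hgL : IsBoundedDensityOn μ L g)
    (hL : μ L ≠ ∞) (hK : MeasurableSet K) (hK₀ : μ K ≠ 0) (hK₁ : μ K ≠ ∞) :
    log (μ K).toReal - Module.finrank ℝ E * log (1 + q) ≤ diffEntropy μ g := by
  have hle : ∀ᶠ a : ℝ in nhdsWithin 0 (Set.Ioi 0), log (μ K).toReal -
      Module.finrank ℝ E * log (1 + q) ≤ diffEntropy μ g + Module.finrank ℝ E * a := by
    filter_upwards [Ioo_mem_nhdsGT one_pos] with a ⟨ha, ha₁⟩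
    have hb : 0 < 1 - a := sub_pos.2 ha₁
    have hb' : 0 < 1 - a / (1 + q) := sub_pos.2 ((div_lt_one (by positivity)).2 (by linarith))
    have hmain := hg.mul_log_measure_le hgL hL hK hK₀ hK₁ ha hb (by ring)
      (div_pos ha (by positivity : 0 < 1 + q)) hb' (by ring)
    rw [div_div_cancel₀ ha.ne', log_div hb.ne' hb'.ne'] at hmain
    have hscalar := mul_le_mul_of_nonneg_left (mul_log_sub_mul_log_le_sq hq ha₁)
      (Nat.cast_nonneg (α := ℝ) (Module.finrank ℝ E))
    refine le_of_mul_le_mul_left ?_ ha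
    linarith
  have hlim : Filter.Tendsto (fun a : ℝ => diffEntropy μ g + Module.finrank ℝ E * a)
      (nhdsWithin 0 (Set.Ioi 0)) (nhds (diffEntropy μ g + Module.finrank ℝ E * 0)) :=
    (Continuous.tendsto (by fun_prop) 0).mono_left nhdsWithin_le_nhds
  rw [mul_zero, add_zero] at hlim
  exact ge_of_tendsto hlim hle

end ReverseEntropy

section Submodular

variable {ι : Type*}

lemma sum_powersetCard_sum {k : ℕ} (hk : 1 ≤ k) (u : Finset ι) (d : ι → ℝ) :
    ∑ s ∈ u.powersetCard k, ∑ i ∈ s, d i = (u.card - 1).choose (k - 1) * ∑ i ∈ u, d i := by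
  classical
  calc ∑ s ∈ u.powersetCard k, ∑ i ∈ s, d i
      = ∑ i ∈ u, ∑ s ∈ u.powersetCard k with i ∈ s, d i := by
        refine Finset.sum_comm' fun s i => ?_
        simp only [Finset.mem_powersetCard, Finset.mem_filter]
        exact ⟨fun ⟨⟨hsu, hs⟩, hi⟩ => ⟨⟨⟨hsu, hs⟩, hi⟩, hsu hi⟩, fun ⟨h, _⟩ => h⟩
    _ = ∑ i ∈ u, (u.card - 1).choose (k - 1) * d i := by
        refine Finset.sum_congr rfl fun i hi => ?_
        have hcard := Finset.card_filter_powersetCard_subset {i} u k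
          (Finset.singleton_subset_iff.2 hi) (by rwa [Finset.card_singleton])
        simp only [Finset.singleton_subset_iff, Finset.card_singleton] at hcard
        rw [Finset.sum_const, hcard, nsmul_eq_mul]
    _ = _ := (Finset.mul_sum ..).symm

variable [DecidableEq ι]

/-- The exchange form of submodularity of a set function. -/
def LocallySubmodular (H : Finset ι → ℝ) : Prop :=
  ∀ ⦃s : Finset ι⦄ ⦃i j : ι⦄, i ∉ s → j ∉ s → i ≠ j →
    H (insert i (insert j s)) + H s ≤ H (insert i s) + H (insert j s)

variable {H : Finset ι → ℝ}

lemma LocallySubmodular.insert_sub_le (hH : LocallySubmodular H) {s t : Finset ι} (hst : s ⊆ t)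
    {i : ι} (hi : i ∉ t) : H (insert i t) - H t ≤ H (insert i s) - H s := by
  obtain ⟨v, rfl⟩ : ∃ v, t = s ∪ v := ⟨t, (Finset.union_eq_right.2 hst).symm⟩
  clear hst
  induction v using Finset.induction_on with
  | empty => rw [Finset.union_empty]
  | insert j v _ ih =>
    rw [Finset.union_insert] at hi ⊢
    obtain ⟨hij, hi⟩ := not_or.1 (Finset.mem_insert.not.1 hi)
    by_cases hj : j ∈ s ∪ v
    · rw [Finset.insert_eq_of_mem hj]
      exact ih hi
    · linarith [ih hi, hH hi hj hij]

lemma LocallySubmodular.exists_sum_eq (hH : LocallySubmodular H) (u : Finset ι) :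
    ∃ d : ι → ℝ, ∑ i ∈ u, d i = H u - H ∅ ∧ ∀ s ⊆ u, ∑ i ∈ s, d i ≤ H s - H ∅ := by
  induction u using Finset.induction_on with
  | empty => exact ⟨0, by simp, fun s hs => by simp [Finset.subset_empty.1 hs]⟩
  | insert j u hj ih =>
    obtain ⟨d, hd, hdle⟩ := ih
    set d' := Function.update d j (H (insert j u) - H u)
    have hsum {s : Finset ι} (hs : s ⊆ u) : ∑ i ∈ s, d' i = ∑ i ∈ s, d i :=
      Finset.sum_update_of_notMem (fun h => hj (hs h)) _ _
    have hd'j : d' j = H (insert j u) - H u := Function.update_self ..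
    refine ⟨d', ?_, fun s hs => ?_⟩
    · rw [Finset.sum_insert hj, hd'j, hsum subset_rfl, hd]
      ring
    · by_cases hjs : j ∈ s
      · have hs' : s.erase j ⊆ u := Finset.subset_insert_iff.1 hs
        have hinc := hH.insert_sub_le hs' hj
        rw [Finset.insert_erase hjs] at hinc
        rw [← Finset.add_sum_erase s d' hjs, hd'j, hsum hs']
        linarith [hdle _ hs']
      · have hs' : s ⊆ u := (Finset.subset_insert_iff_of_notMem hjs).1 hs
        rw [hsum hs']
        exact hdle s hs'

theorem LocallySubmodular.choose_mul_sub_le_sum (hH : LocallySubmodular H) {k : ℕ} (hk : 1 ≤ k)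
    (u : Finset ι) :
    (u.card - 1).choose (k - 1) * (H u - H ∅) ≤ ∑ s ∈ u.powersetCard k, (H s - H ∅) := by
  obtain ⟨d, hd, hdle⟩ := hH.exists_sum_eq u
  rw [← hd, ← sum_powersetCard_sum hk]
  exact Finset.sum_le_sum fun s hs => hdle s (Finset.mem_powersetCard.1 hs).1

end Submodular

section UniformDensity

/-- The density with respect to `μ` of the uniform distribution on `A`. -/
noncomputable def uniformDensity {α : Type*} [MeasurableSpace α] (μ : Measure α) (A : Set α) :
    α → ℝ≥0∞ :=
  A.indicator fun _ => (μ A)⁻¹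

variable {α : Type*} [MeasurableSpace α] {μ : Measure α} {A : Set α}

lemma isBoundedDensityOn_uniformDensity (hA : MeasurableSet A) (hA₀ : μ A ≠ 0) (hA₁ : μ A ≠ ∞) :
    IsBoundedDensityOn μ A (uniformDensity μ A) where
  measurable := measurable_const.indicator hA
  exists_le := by
    lift (μ A)⁻¹ to NNReal using ENNReal.inv_ne_top.2 hA₀ with C hC
    refine ⟨C, fun x => ?_⟩
    rw [uniformDensity, ← hC]
    exact Set.indicator_le_self' (fun _ _ => zero_le) x
  lintegral_eq_one := by
    rw [uniformDensity, lintegral_indicator_const hA, ENNReal.inv_mul_cancel hA₀ hA₁]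
  eq_zero _ hx := Set.indicator_of_notMem hx _

lemma diffEntropy_uniformDensity (hA : MeasurableSet A) (hA₀ : μ A ≠ 0) (hA₁ : μ A ≠ ∞) :
    diffEntropy μ (uniformDensity μ A) = log (μ A).toReal := by
  have hdens := isBoundedDensityOn_uniformDensity hA hA₀ hA₁
  have := hdens.isProbabilityMeasure
  have hlog : ∀ᵐ x ∂(μ.withDensity (uniformDensity μ A)),
      log (uniformDensity μ A x).toReal = -log (μ A).toReal := by
    filter_upwards [hdens.ae_toReal_pos] with x hx
    by_cases hxA : x ∈ A
    · rw [uniformDensity, Set.indicator_of_mem hxA, ENNReal.toReal_inv, log_inv]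
    · simp [hdens.eq_zero x hxA] at hx
  rw [diffEntropy, integral_congr_ae hlog, integral_const, probReal_univ, one_smul, neg_neg]

lemma powStarConcave_uniformDensity {E : Type*} [AddCommGroup E] [Module ℝ E] [MeasurableSpace E]
    {μ : Measure E} {A : Set E} (hA : Convex ℝ A) : PowStarConcave 0 A (uniformDensity μ A) := by
  intro a b ha hb hab t ht s
  rw [ENNReal.rpow_zero, one_mul]
  by_cases hs : s ∈ A
  · rw [uniformDensity, Set.indicator_of_mem hs, Set.indicator_of_mem (hA ht hs ha.le hb.le hab)]
  · rw [uniformDensity, Set.indicator_of_notMem hs]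
    exact zero_le

end UniformDensity

section SumDensity

/-- If `X` and the `Y i` are independent with densities `f` and `u i`, this is the density of
`X + ∑ i ∈ s, Y i`, as an iterated convolution. -/
noncomputable def sumDensity {G ι : Type*} [AddGroup G] [MeasurableSpace G] (μ : Measure G)
    (f : G → ℝ≥0∞) (u : ι → G → ℝ≥0∞) (s : Finset ι) : G → ℝ≥0∞ :=
  s.toList.foldr (fun i g => u i ⋆ₗ[μ] g) f

variable {G ι : Type*} [AddCommGroup G] [MeasurableSpace G] {μ : Measure G} {f : G → ℝ≥0∞}
  {u : ι → G → ℝ≥0∞}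

lemma sumDensity_empty : sumDensity μ f u ∅ = f := by
  rw [sumDensity, Finset.toList_empty, List.foldr_nil]

variable [MeasurableAdd₂ G] [MeasurableNeg G] [SFinite μ]

lemma measurable_foldr_lconvolution (hf : Measurable f) (hu : ∀ i, Measurable (u i)) (l : List ι) :
    Measurable (l.foldr (fun i g => u i ⋆ₗ[μ] g) f) := by
  induction l with
  | nil => exact hf
  | cons i l ih => exact measurable_lconvolution μ (hu i) ih

variable [μ.IsAddLeftInvariant] [μ.IsNegInvariant]

lemma foldr_lconvolution_eq_of_perm (hf : Measurable f) (hu : ∀ i, Measurable (u i))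
    {l l' : List ι} (h : l.Perm l') :
    l.foldr (fun i g => u i ⋆ₗ[μ] g) f = l'.foldr (fun i g => u i ⋆ₗ[μ] g) f := by
  induction h with
  | nil => rfl
  | cons i _ ih => rw [List.foldr_cons, List.foldr_cons, ih]
  | swap i j l =>
    exact lconvolution_left_comm (hu j) (hu i) (measurable_foldr_lconvolution hf hu l)
  | trans _ _ ih ih' => exact ih.trans ih'

lemma sumDensity_insert [DecidableEq ι] (hf : Measurable f) (hu : ∀ i, Measurable (u i))
    {s : Finset ι} {i : ι} (hi : i ∉ s) :
    sumDensity μ f u (insert i s) = u i ⋆ₗ[μ] sumDensity μ f u s :=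
  foldr_lconvolution_eq_of_perm hf hu (Finset.toList_insert hi)

lemma add_sum_insert [DecidableEq ι] {M : Type*} [AddCommMonoid M] (K : M) (L : ι → M)
    {s : Finset ι} {i : ι} (hi : i ∉ s) : K + ∑ j ∈ insert i s, L j = L i + (K + ∑ j ∈ s, L j) := by
  rw [Finset.sum_insert hi, add_left_comm]

variable {K : Set G} {L : ι → Set G}

lemma isBoundedDensityOn_sumDensity (hf : IsBoundedDensityOn μ K f)
    (hu : ∀ i, IsBoundedDensityOn μ (L i) (u i)) (s : Finset ι) :
    IsBoundedDensityOn μ (K + ∑ i ∈ s, L i) (sumDensity μ f u s) := by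
  classical
  induction s using Finset.induction_on with
  | empty => simpa only [sumDensity_empty, Finset.sum_empty, add_zero] using hf
  | insert i s hi ih =>
    rw [sumDensity_insert hf.measurable (fun i => (hu i).measurable) hi, add_sum_insert K L hi]
    exact (hu i).lconvolution ih

theorem locallySubmodular_diffEntropy_sumDensity [DecidableEq ι] (hf : IsBoundedDensityOn μ K f)
    (hu : ∀ i, IsBoundedDensityOn μ (L i) (u i))
    (hfin : ∀ s : Finset ι, μ (K + ∑ i ∈ s, L i) ≠ ∞) :
    LocallySubmodular fun s => diffEntropy μ (sumDensity μ f u s) := by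
  intro s i j hi hj hij
  have hum i := (hu i).measurable
  have hs := isBoundedDensityOn_sumDensity hf hu s
  have hij' : i ∉ insert j s := by simp [hi, hij]
  have hsets (j : ι) (hj : j ∉ s) : K + ∑ i ∈ s, L i + L j = K + ∑ i ∈ insert j s, L i := by
    rw [add_sum_insert K L hj, add_comm]
  have hsets' : K + ∑ i ∈ s, L i + (L i + L j) = K + ∑ i ∈ insert i (insert j s), L i := by
    rw [add_sum_insert K L hij', add_sum_insert K L hj, ← add_assoc (L i), add_comm]
  have hsub := diffEntropy_lconvolution_add_le hs (hu i) (hu j) (hfin s)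
    (by rw [hsets i hi]; exact hfin _) (by rw [hsets j hj]; exact hfin _)
    (by rw [hsets']; exact hfin _)
  have hconv : sumDensity μ f u s ⋆ₗ[μ] (u i ⋆ₗ[μ] u j) =
      sumDensity μ f u (insert i (insert j s)) := by
    rw [sumDensity_insert hf.measurable hum hij', sumDensity_insert hf.measurable hum hj,
      lconvolution_comm, ← lconvolution_assoc (hum i) (hum j) hs.measurable]
  rw [hconv, lconvolution_comm (g := u i), lconvolution_comm (g := u j),
    ← sumDensity_insert hf.measurable hum hi, ← sumDensity_insert hf.measurable hum hj] at hsub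
  exact hsub

lemma powStarConcave_sumDensity {E : Type*} [NormedAddCommGroup E] [NormedSpace ℝ E]
    [FiniteDimensional ℝ E] [MeasurableSpace E] [BorelSpace E] {μ : Measure E}
    [μ.IsAddHaarMeasure] {f : E → ℝ≥0∞} {u : ι → E → ℝ≥0∞} {K : Set E} {L : ι → Set E}
    (hfm : Measurable f) (hum : ∀ i, Measurable (u i)) (hf : PowStarConcave 0 K f)
    (hu : ∀ i, PowStarConcave 0 (L i) (u i)) (s : Finset ι) :
    PowStarConcave (Module.finrank ℝ E * s.card) (K + ∑ i ∈ s, L i) (sumDensity μ f u s) := by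
  classical
  induction s using Finset.induction_on with
  | empty =>
    simpa only [sumDensity_empty, Finset.sum_empty, add_zero, Finset.card_empty, Nat.cast_zero,
      mul_zero] using hf
  | insert i s hi ih =>
    rw [sumDensity_insert hfm hum hi, add_sum_insert K L hi]
    have hsm : Measurable (sumDensity μ f u s) := measurable_foldr_lconvolution hfm hum _
    convert (hu i).lconvolution (μ := μ) le_rfl (by positivity) (hum i) hsm ih using 1
    rw [Finset.card_insert_of_notMem hi]
    push_cast
    ring

end SumDensity

section ConvexSums

lemma isCompact_add_sum {M ι : Type*} [AddCommMonoid M] [TopologicalSpace M] [ContinuousAdd M]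
    {A : Set M} (hA : IsCompact A) {B : ι → Set M} (hB : ∀ i, IsCompact (B i)) (s : Finset ι) :
    IsCompact (A + ∑ i ∈ s, B i) :=
  hA.add (Finset.sum_induction B IsCompact (fun _ _ => IsCompact.add) isCompact_singleton
    fun i _ => hB i)

lemma measure_add_sum_ne_zero {G ι : Type*} [AddCommGroup G] [MeasurableSpace G]
    [MeasurableAdd G] {μ : Measure G} [μ.IsAddRightInvariant] {A : Set G} (hA : μ A ≠ 0)
    {B : ι → Set G} (hB : ∀ i, (B i).Nonempty) (s : Finset ι) : μ (A + ∑ i ∈ s, B i) ≠ 0 := by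
  obtain ⟨b, hb⟩ : (∑ i ∈ s, B i).Nonempty :=
    Finset.sum_induction B Set.Nonempty (fun _ _ => Set.Nonempty.add) Set.zero_nonempty
      fun i _ => hB i
  have htranslate : μ (A + {b}) ≠ 0 := by simpa using hA
  exact fun h => htranslate <|
    measure_mono_null (Set.add_subset_add_left (Set.singleton_subset_iff.2 hb)) h

variable {E ι : Type*} [NormedAddCommGroup E] [NormedSpace ℝ E] [FiniteDimensional ℝ E]
  [MeasurableSpace E] [BorelSpace E] (μ : Measure E) [μ.IsAddHaarMeasure]
  {A : Set E} {B : ι → Set E}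

theorem choose_mul_log_measure_sub_le_sum (hA : IsCompact A) (hAc : Convex ℝ A)
    (hA₀ : μ A ≠ 0) (hB : ∀ i, IsCompact (B i)) (hBc : ∀ i, Convex ℝ (B i))
    (hB₀ : ∀ i, μ (B i) ≠ 0) {k : ℕ} (hk : 1 ≤ k) (u : Finset ι) :
    (u.card - 1).choose (k - 1) * (log (μ (A + ∑ i ∈ u, B i)).toReal - log (μ A).toReal -
        Module.finrank ℝ E * log (1 + u.card)) ≤
      ∑ s ∈ u.powersetCard k, (log (μ (A + ∑ i ∈ s, B i)).toReal - log (μ A).toReal) := by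
  classical
  set H : Finset ι → ℝ := fun s =>
    diffEntropy μ (sumDensity μ (uniformDensity μ A) (fun i => uniformDensity μ (B i)) s)
  have hsum := isCompact_add_sum hA hB
  have hfin s := (hsum s).measure_ne_top (μ := μ)
  have hsum₀ := measure_add_sum_ne_zero hA₀ fun i => nonempty_of_measure_ne_zero (hB₀ i)
  have hAd := isBoundedDensityOn_uniformDensity hA.measurableSet hA₀ hA.measure_ne_top
  have hBd i := isBoundedDensityOn_uniformDensity (hB i).measurableSet (hB₀ i) (hB i).measure_ne_top
  have hempty : H ∅ = log (μ A).toReal := by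
    simp only [H, sumDensity_empty,
      diffEntropy_uniformDensity hA.measurableSet hA₀ hA.measure_ne_top]
  have hupper (s : Finset ι) : H s ≤ log (μ (A + ∑ i ∈ s, B i)).toReal :=
    (isBoundedDensityOn_sumDensity hAd hBd s).diffEntropy_le_log_measure (hsum s).measurableSet
      (hsum₀ s) (hfin s)
  have hlower : log (μ (A + ∑ i ∈ u, B i)).toReal - Module.finrank ℝ E * log (1 + u.card) ≤ H u :=
    (powStarConcave_sumDensity hAd.measurable (fun i => (hBd i).measurable)
      (powStarConcave_uniformDensity hAc) (fun i => powStarConcave_uniformDensity (hBc i))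
      u).log_measure_sub_le_diffEntropy (Nat.cast_nonneg _)
      (isBoundedDensityOn_sumDensity hAd hBd u) (hfin u) (hsum u).measurableSet (hsum₀ u) (hfin u)
  calc _ ≤ (u.card - 1).choose (k - 1) * (H u - H ∅) :=
        mul_le_mul_of_nonneg_left (by linarith) (Nat.cast_nonneg _)
    _ ≤ ∑ s ∈ u.powersetCard k, (H s - H ∅) :=
        (locallySubmodular_diffEntropy_sumDensity hAd hBd hfin).choose_mul_sub_le_sum hk u
    _ ≤ _ := by
        gcongr with s
        · exact hupper s
        · exact hempty.ge

lemma rpow_one_div_le_of_mul_log_sub_le_sum {σ : Type*} {S : Finset σ} {x y M N d : ℝ}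
    {z c : σ → ℝ} (hx : 0 < x) (hy : 0 < y) (hz : ∀ s ∈ S, 0 < z s) (hM : 0 < M) (hN : 0 < N)
    (hd : 0 < d) (hzc : ∀ s ∈ S, z s ^ (1 / d) ≤ c s * x ^ (1 / d))
    (hlog : N * (log y - log x - d * log M) ≤ ∑ s ∈ S, (log (z s) - log x)) :
    y ^ (1 / d) ≤ M * (∏ s ∈ S, c s) ^ (1 / N) * x ^ (1 / d) := by
  have hxd := rpow_pos_of_pos hx (1 / d)
  have hc : ∀ s ∈ S, 0 < c s := fun s hs =>
    pos_of_mul_pos_left ((rpow_pos_of_pos (hz s hs) _).trans_le (hzc s hs)) hxd.le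
  have hle : ∀ s ∈ S, log (z s) - log x ≤ d * log (c s) := by
    intro s hs
    have h := log_le_log (rpow_pos_of_pos (hz s hs) _) (hzc s hs)
    rw [log_mul (hc s hs).ne' hxd.ne', log_rpow (hz s hs), log_rpow hx] at h
    field_simp at h
    linarith
  have hmean : N * (log y - log x - d * log M) ≤ d * log (∏ s ∈ S, c s) := by
    rw [log_prod fun s hs => (hc s hs).ne', Finset.mul_sum]
    exact hlog.trans (Finset.sum_le_sum hle)
  have hP := Finset.prod_pos hc
  rw [← log_le_log_iff (by positivity) (by positivity), log_mul (by positivity) hxd.ne',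
    log_mul hM.ne' (by positivity), log_rpow hy, log_rpow hx, log_rpow hP]
  field_simp
  linarith

theorem statement18_general [Nontrivial E] [Fintype ι] {k : ℕ} (hk : 1 ≤ k)
    (hkι : k ≤ Fintype.card ι) (hA : IsCompact A) (hAc : Convex ℝ A) (hA₀ : (interior A).Nonempty)
    (hB : ∀ i, IsCompact (B i)) (hBc : ∀ i, Convex ℝ (B i)) (hB₀ : ∀ i, (interior (B i)).Nonempty)
    (c : Finset ι → ℝ)
    (hc : ∀ s : Finset ι, s.card = k →
      (μ (A + ∑ i ∈ s, B i)).toReal ^ ((1 : ℝ) / Module.finrank ℝ E) ≤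
        c s * (μ A).toReal ^ ((1 : ℝ) / Module.finrank ℝ E)) :
    (μ (A + ∑ i, B i)).toReal ^ ((1 : ℝ) / Module.finrank ℝ E) ≤
      (1 + Fintype.card ι) *
        (∏ s ∈ Finset.powersetCard k (Finset.univ : Finset ι), c s) ^
          (1 / ((Fintype.card ι - 1).choose (k - 1) : ℝ)) *
        (μ A).toReal ^ ((1 : ℝ) / Module.finrank ℝ E) := by
  have hA₁ := (Measure.measure_pos_of_nonempty_interior μ hA₀).ne'
  have hB₁ i := (Measure.measure_pos_of_nonempty_interior μ (hB₀ i)).ne'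
  have hpos (s : Finset ι) : 0 < (μ (A + ∑ i ∈ s, B i)).toReal :=
    ENNReal.toReal_pos (measure_add_sum_ne_zero hA₁ (fun i => (hB₀ i).mono interior_subset) s)
      (isCompact_add_sum hA hB s).measure_ne_top
  refine rpow_one_div_le_of_mul_log_sub_le_sum (ENNReal.toReal_pos hA₁ hA.measure_ne_top)
    (hpos Finset.univ) (fun s _ => hpos s) (by positivity)
    (Nat.cast_pos.2 <| Nat.choose_pos <| Nat.sub_le_sub_right hkι 1)
    (Nat.cast_pos.2 Module.finrank_pos)
    (fun s hs => hc s (Finset.mem_powersetCard.1 hs).2) ?_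
  simpa only [Finset.card_univ] using
    choose_mul_log_measure_sub_le_sum μ hA hAc hA₁ hB hBc hB₁ hk Finset.univ

end ConvexSums

/-- Continuous Plünnecke–Ruzsa inequality for convex bodies (Corollary 7.4). -/
theorem statement18 (n m k : ℕ) (hn : 1 ≤ n) (hk : 1 ≤ k) (hkm : k ≤ m)
    (A : Set (EuclideanSpace ℝ (Fin n)))
    (B : Fin m → Set (EuclideanSpace ℝ (Fin n)))
    (hA : IsConvexBody A) (hB : ∀ i, IsConvexBody (B i))
    (c : Finset (Fin m) → ℝ)
    (hc : ∀ s : Finset (Fin m), s.card = k →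
      (volume (A + ∑ i ∈ s, B i)).toReal ^ ((1 : ℝ) / n) ≤
        c s * (volume A).toReal ^ ((1 : ℝ) / n)) :
    (volume (A + ∑ i, B i)).toReal ^ ((1 : ℝ) / n) ≤
      (1 + m) *
        (∏ s ∈ Finset.powersetCard k (Finset.univ : Finset (Fin m)), c s) ^
          (1 / (Nat.choose (m - 1) (k - 1) : ℝ)) *
        (volume A).toReal ^ ((1 : ℝ) / n) := by
  have : Nonempty (Fin n) := Fin.pos_iff_nonempty.1 hn
  simpa only [finrank_euclideanSpace_fin, Fintype.card_fin] using
    statement18_general volume (c := c) hk (by rwa [Fintype.card_fin]) hA.2.1 hA.1 hA.2.2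
      (fun i => (hB i).2.1) (fun i => (hB i).1) (fun i => (hB i).2.2)
      (by simpa only [finrank_euclideanSpace_fin] using hc)
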